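/- Let μ ∈ [0,1), and define on T the functions ψ_μ^{(1)}(t) = u_{−1/2,1}( (t−μ)/(1−μt) ) − 1 and ψ_μ^{(−1)}(t) = u_{1/2,1}( (−t−μ)/(1+μt) ) − 1. Then there exist unitary operators U₁ and U₂ on ℓ²(ℕ) such that U₁ H(ψ_μ^{(1)}) U₁* = H(u_{−1/2,1}) and U₂ H(ψ_μ^{(−1)}) U₂* = −H(u_{1/2,1}); in particular H(ψ_μ^{(1)}) is unitarily equivalent to H(u_{−1/2,1}) and H(ψ_μ^{(−1)}) is unitarily equivalent to −H(u_{1/2,1}). -/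

import Mathlib

open Filter MeasureTheory
open scoped InnerProductSpace

noncomputable section

/-- ℓ²(ℕ) over ℂ. -/
abbrev l2 : Type := lp (fun _ : ℕ => ℂ) 2

/-- The `k`-th Fourier coefficient of a function on the unit circle, given as a
`2π`-periodic function of the angle: `a_k = (1/(2π)) ∫_0^{2π} f(θ) e^{-ikθ} dθ`. -/
def fc (f : ℝ → ℂ) (k : ℤ) : ℂ :=
  ((1 / (2 * Real.pi) : ℝ) : ℂ) *
    ∫ θ in (0:ℝ)..(2 * Real.pi), f θ * Complex.exp (-(Complex.I * k * θ))

/-- The standard orthonormal basis vector `e_j` of ℓ²(ℕ). -/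
def ee (j : ℕ) : l2 := lp.single 2 j 1

/-- Matrix entry `⟨e_j, A e_k⟩` of an operator on ℓ²(ℕ). -/
def ent (A : l2 →L[ℂ] l2) (j k : ℕ) : ℂ := ⟪ee j, A (ee k)⟫_ℂ

/-- The function `u_{β,1}` evaluated at a point `t` of the unit circle:
`u_{β,1}(e^{iθ}) = exp(iβ(θ−π))` for `0 < θ < 2π`, i.e. `exp(β · Log(−t))`. -/
def uc (β : ℂ) (t : ℂ) : ℂ := Complex.exp (β * Complex.log (-t))

/-- The entries of the matrix with generating function
`∑ a(m,k) z^m w^k = √(1-ν²) / (1 - ν z - ν w + z w)`. -/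
def moebiusEntry (ν : ℝ) : ℕ → ℕ → ℝ
  | m, 0 => √(1 - ν ^ 2) * ν ^ m
  | 0, k + 1 => √(1 - ν ^ 2) * ν ^ (k + 1)
  | m + 1, k + 1 => ν * (moebiusEntry ν m (k + 1) + moebiusEntry ν (m + 1) k) - moebiusEntry ν m k

theorem moebiusEntry_symm (ν : ℝ) (m k : ℕ) : moebiusEntry ν m k = moebiusEntry ν k m := by
  induction m generalizing k with
  | zero => cases k <;> simp [moebiusEntry]
  | succ m ihm =>
    induction k with
    | zero => simp [moebiusEntry]
    | succ k ihk => rw [moebiusEntry, moebiusEntry, ihm, ihm, ihk]; ring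

theorem summable_abs_of_linear_recurrence {ν : ℝ} (hν : |ν| < 1) {a d : ℕ → ℝ}
    (h : ∀ m, a (m + 1) = ν * a m + d m) (hd : Summable fun m => |d m|) :
    Summable fun m => |a m| := by
  refine summable_of_sum_range_le (c := (|a 0| + ∑' m, |d m|) / (1 - |ν|))
    (fun _ => abs_nonneg _) fun n => ?_
  rw [le_div_iff₀ (by linarith)]
  have h1 : ∑ i ∈ Finset.range n, |a i| ≤ ∑ i ∈ Finset.range (n + 1), |a i| := by
    rw [Finset.sum_range_succ]; linarith [abs_nonneg (a n)]
  have h2 : ∑ i ∈ Finset.range (n + 1), |a i|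
      ≤ |ν| * (∑ i ∈ Finset.range n, |a i|) + (∑' m, |d m|) + |a 0| := by
    rw [Finset.sum_range_succ']
    gcongr
    calc ∑ i ∈ Finset.range n, |a (i + 1)|
        ≤ ∑ i ∈ Finset.range n, (|ν| * |a i| + |d i|) := by
          gcongr with i
          rw [h, ← abs_mul]
          exact abs_add_le _ _
      _ ≤ _ := by
          rw [Finset.sum_add_distrib, ← Finset.mul_sum]
          gcongr
          exact hd.sum_le_tsum _ fun _ _ => abs_nonneg _
  linarith

theorem summable_abs_moebiusEntry {ν : ℝ} (hν : |ν| < 1) (k : ℕ) :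
    Summable fun m => |moebiusEntry ν m k| := by
  induction k with
  | zero =>
    simp only [moebiusEntry, abs_mul, abs_pow]
    exact (summable_geometric_of_lt_one (abs_nonneg _) hν).mul_left _
  | succ k ih =>
    refine summable_abs_of_linear_recurrence (a := fun m => moebiusEntry ν m (k + 1))
      (d := fun m => ν * moebiusEntry ν (m + 1) k - moebiusEntry ν m k) hν
      (fun m => by simp only [moebiusEntry]; ring) ?_
    have h1 : Summable fun m => |moebiusEntry ν (m + 1) k| :=
      (summable_nat_add_iff (f := fun m => |moebiusEntry ν m k|) 1).2 ih
    refine Summable.of_nonneg_of_le (fun _ => abs_nonneg _) (fun m => ?_) ((h1.mul_left |ν|).add ih)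
    rw [← abs_mul]
    exact abs_sub _ _

theorem one_sub_mul_ne_zero {ν : ℝ} (hν : |ν| < 1) {t : ℂ} (ht : ‖t‖ = 1) :
    1 - ν * t ≠ 0 := by
  intro h
  have : ‖(ν : ℂ) * t‖ = 1 := by rw [← sub_eq_zero.1 h]; simp
  rw [norm_mul, ht, Complex.norm_real, Real.norm_eq_abs] at this
  linarith

theorem summable_moebiusEntry_mul_pow {ν : ℝ} (hν : |ν| < 1) (k : ℕ) {t : ℂ} (ht : ‖t‖ = 1) :
    Summable fun m => (moebiusEntry ν m k : ℂ) * t ^ m := by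
  refine Summable.of_norm ?_
  simpa [ht] using summable_abs_moebiusEntry hν k

theorem hasSum_moebiusEntry_mul_pow {ν : ℝ} (hν : |ν| < 1) (k : ℕ) {t : ℂ} (ht : ‖t‖ = 1) :
    HasSum (fun m => (moebiusEntry ν m k : ℂ) * t ^ m)
      ((√(1 - ν ^ 2) : ℝ) * (ν - t) ^ k / (1 - ν * t) ^ (k + 1)) := by
  have hne := one_sub_mul_ne_zero hν ht
  induction k with
  | zero =>
    have := (hasSum_geometric_of_norm_lt_one (ξ := (ν : ℂ) * t)
      (by simpa [ht] using hν)).mul_left ((√(1 - ν ^ 2) : ℝ) : ℂ)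
    rw [pow_zero, mul_one, zero_add, pow_one, div_eq_mul_inv]
    exact this.congr_fun fun m => by simp only [moebiusEntry]; push_cast; ring
  | succ k ih =>
    have hs := (summable_moebiusEntry_mul_pow hν (k + 1) ht).hasSum
    set S := ∑' m, (moebiusEntry ν m (k + 1) : ℂ) * t ^ m
    have h1 := (hasSum_nat_add_iff' 1).2 hs
    have h2 := (((hs.mul_left (ν * t)).add (((hasSum_nat_add_iff' 1).2 ih).mul_left (ν : ℂ))).sub
      (ih.mul_left t))
    have h3 := h1.unique (h2.congr_fun fun m => by simp only [moebiusEntry]; push_cast; ring)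
    have h4 : (moebiusEntry ν 0 (k + 1) : ℂ) = ν * moebiusEntry ν 0 k := by
      cases k <;> simp [moebiusEntry] <;> ring
    simp only [Finset.range_one, Finset.sum_singleton, pow_zero, mul_one, h4] at h3
    convert hs using 1
    symm
    rw [eq_div_iff (pow_ne_zero _ hne)]
    have h5 : (1 - ν * t) * S =
        (ν - t) * ((√(1 - ν ^ 2) : ℝ) * (ν - t) ^ k / (1 - ν * t) ^ (k + 1)) := by
      linear_combination h3
    rw [pow_succ, mul_comm _ (1 - (ν : ℂ) * t), ← mul_assoc, mul_comm S, h5]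
    field_simp
    ring

theorem norm_exp_I_mul_ofReal (θ : ℝ) : ‖Complex.exp (Complex.I * θ)‖ = 1 := by
  rw [mul_comm]; exact Complex.norm_exp_ofReal_mul_I θ

/-- The angular derivative of a Möbius automorphism of the unit circle: the Poisson kernel. -/
def poisson (ν θ : ℝ) : ℝ := (1 - ν ^ 2) / Complex.normSq (1 - ν * Complex.exp (Complex.I * θ))

/-- A continuous choice of the argument of `(t - ν) / (1 - ν t)`, where `t = e^{iθ}`. -/
def moebiusAngle (ν θ : ℝ) : ℝ := θ - 2 * (Complex.log (1 - ν * Complex.exp (Complex.I * θ))).im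

theorem exp_moebiusAngle {ν : ℝ} (hν : |ν| < 1) (θ : ℝ) :
    Complex.exp (Complex.I * moebiusAngle ν θ) =
      (Complex.exp (Complex.I * θ) - ν) / (1 - ν * Complex.exp (Complex.I * θ)) := by
  have ht := norm_exp_I_mul_ofReal θ
  have hw := one_sub_mul_ne_zero hν ht
  set t := Complex.exp (Complex.I * θ) with htdef
  set w := 1 - (ν : ℂ) * t with hwdef
  have hL : Complex.I * moebiusAngle ν θ =
      Complex.I * θ + (starRingEnd ℂ (Complex.log w) - Complex.log w) := by
    rw [moebiusAngle, ← htdef, ← hwdef]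
    apply Complex.ext <;> (simp; try ring)
  have htc : t * starRingEnd ℂ t = 1 := by rw [Complex.mul_conj']; simp [ht]
  rw [hL, Complex.exp_add, Complex.exp_sub, Complex.exp_conj, Complex.exp_log hw, ← htdef, hwdef]
  simp only [map_sub, map_one, map_mul, Complex.conj_ofReal]
  rw [← mul_div_assoc]
  congr 1
  linear_combination (-(ν : ℂ)) * htc

theorem hasDerivAt_moebiusAngle {ν : ℝ} (hν : |ν| < 1) (θ : ℝ) :
    HasDerivAt (moebiusAngle ν) (poisson ν θ) θ := by
  have ht := norm_exp_I_mul_ofReal θ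
  have hw := one_sub_mul_ne_zero hν ht
  have hslit : 1 - (ν : ℂ) * Complex.exp (Complex.I * θ) ∈ Complex.slitPlane := by
    left
    have : ((ν : ℂ) * Complex.exp (Complex.I * θ)).re ≤ |ν| := by
      refine (Complex.re_le_norm _).trans ?_
      rw [norm_mul, ht, Complex.norm_real, Real.norm_eq_abs, mul_one]
    rw [Complex.sub_re, Complex.one_re]
    linarith
  have h1 : HasDerivAt (fun x : ℝ => 1 - (ν : ℂ) * Complex.exp (Complex.I * x))
      (-(ν * (Complex.exp (Complex.I * θ) * Complex.I))) θ := by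
    have h0 : HasDerivAt (fun x : ℝ => Complex.I * (x : ℂ)) (Complex.I * 1) θ :=
      (HasDerivAt.ofReal_comp (hasDerivAt_id θ)).const_mul _
    simpa using ((h0.cexp).const_mul (ν : ℂ)).const_sub 1
  have h2 := h1.clog_real hslit
  have h3 : HasDerivAt (fun x : ℝ =>
      (Complex.log (1 - (ν : ℂ) * Complex.exp (Complex.I * x))).im) _ θ :=
    (Complex.imCLM.hasFDerivAt.comp_hasDerivAt θ h2)
  refine ((hasDerivAt_id θ).sub (h3.const_mul 2)).congr_deriv ?_
  have hsq : Complex.normSq (Complex.exp (Complex.I * θ)) = 1 := by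
    rw [Complex.normSq_eq_norm_sq, ht]; norm_num
  have hn : Complex.normSq (1 - (ν : ℂ) * Complex.exp (Complex.I * θ)) ≠ 0 := by
    simpa using hw
  rw [poisson, Complex.imCLM_apply, Complex.div_im]
  field_simp
  simp only [Complex.normSq_apply] at *
  simp at *
  linear_combination (-ν ^ 2) * hsq

theorem poisson_nonneg {ν : ℝ} (hν : |ν| < 1) (θ : ℝ) : 0 ≤ poisson ν θ :=
  div_nonneg (by nlinarith [sq_abs ν, abs_nonneg ν]) (Complex.normSq_nonneg _)

theorem exp_I_mul_add_two_pi (θ : ℝ) :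
    Complex.exp (Complex.I * ((θ + 2 * Real.pi : ℝ) : ℂ)) = Complex.exp (Complex.I * θ) := by
  push_cast
  rw [mul_add, Complex.exp_add,
    show Complex.I * (2 * (Real.pi : ℂ)) = 2 * Real.pi * Complex.I by ring,
    Complex.exp_two_pi_mul_I, mul_one]

theorem integral_comp_neg_exp (H : ℂ → ℂ) :
    ∫ θ in (0 : ℝ)..(2 * Real.pi), H (-Complex.exp (Complex.I * θ)) =
      ∫ θ in (0 : ℝ)..(2 * Real.pi), H (Complex.exp (Complex.I * θ)) := by
  have hper : Function.Periodic (fun θ : ℝ => H (Complex.exp (Complex.I * θ))) (2 * Real.pi) :=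
    fun θ => by simp only [exp_I_mul_add_two_pi]
  have h := hper.intervalIntegral_add_eq Real.pi 0
  rw [zero_add, add_comm] at h
  have hs := intervalIntegral.integral_comp_add_right (a := 0) (b := 2 * Real.pi)
    (fun θ : ℝ => H (Complex.exp (Complex.I * θ))) Real.pi
  rw [zero_add] at hs
  rw [← h, ← hs]
  refine intervalIntegral.integral_congr fun θ _ => congrArg H ?_
  push_cast
  rw [mul_add, Complex.exp_add, mul_comm Complex.I (Real.pi : ℂ), Complex.exp_pi_mul_I]
  ring

theorem integral_comp_moebius {ν : ℝ} (hν : |ν| < 1) {δ : ℝ} (hδ : δ = 1 ∨ δ = -1) (H : ℂ → ℂ) :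
    ∫ θ in (0 : ℝ)..(2 * Real.pi), poisson ν θ • H (δ * ((ν - Complex.exp (Complex.I * θ)) /
        (1 - ν * Complex.exp (Complex.I * θ)))) =
      ∫ θ in (0 : ℝ)..(2 * Real.pi), H (Complex.exp (Complex.I * θ)) := by
  have key (G : ℂ → ℂ) : ∫ θ in (0 : ℝ)..(2 * Real.pi), poisson ν θ •
      G ((Complex.exp (Complex.I * θ) - ν) / (1 - ν * Complex.exp (Complex.I * θ))) =
      ∫ θ in (0 : ℝ)..(2 * Real.pi), G (Complex.exp (Complex.I * θ)) := by
    have h := intervalIntegral.integral_deriv_smul_comp_of_deriv_nonneg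
      (a := 0) (b := 2 * Real.pi) (f := moebiusAngle ν) (f' := poisson ν)
      (g := fun θ : ℝ => G (Complex.exp (Complex.I * θ)))
      (fun θ _ => (hasDerivAt_moebiusAngle hν θ).continuousAt.continuousWithinAt)
      (fun θ _ => hasDerivAt_moebiusAngle hν θ) (fun θ _ => poisson_nonneg hν θ)
    have hp : 0 ≤ 1 - ν := by linarith [le_abs_self ν]
    have e0 : moebiusAngle ν 0 = 0 := by
      have := Complex.arg_ofReal_of_nonneg hp
      push_cast at this
      simp [moebiusAngle, Complex.log_im, this]
    have e1 : moebiusAngle ν (2 * Real.pi) = 2 * Real.pi := by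
      have := exp_I_mul_add_two_pi 0
      rw [zero_add] at this
      rw [moebiusAngle, this]
      simpa [moebiusAngle] using e0
    rw [e0, e1] at h
    rw [← h]
    simp only [Function.comp_apply, exp_moebiusAngle hν]
  rcases hδ with rfl | rfl
  · rw [← integral_comp_neg_exp, ← key fun z => H (-z)]
    congr! 4
    push_cast
    ring
  · rw [← key]
    congr! 4
    push_cast
    ring

theorem hasSum_mul_fc {c : ℕ → ℂ} (hc : Summable fun n => ‖c n‖) {g : ℝ → ℂ} (hg : Measurable g)
    {C : ℝ} (hgC : ∀ θ, ‖g θ‖ ≤ C) (σ k : ℤ) {h : ℝ → ℂ}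
    (hh : ∀ θ : ℝ, HasSum (fun n : ℕ => c n * Complex.exp (-(Complex.I * (σ * n : ℤ) * θ))) (h θ)) :
    HasSum (fun n : ℕ => c n * fc g (k + σ * n)) (fc (fun θ => h θ * g θ) k) := by
  have hE (j : ℤ) (θ : ℝ) : ‖Complex.exp (-(Complex.I * j * θ))‖ = 1 := by
    simp [Complex.norm_exp]
  have key := intervalIntegral.hasSum_integral_of_dominated_convergence (μ := volume)
    (a := 0) (b := 2 * Real.pi)
    (F := fun (n : ℕ) (θ : ℝ) => c n * (g θ * Complex.exp (-(Complex.I * (k + σ * n : ℤ) * θ))))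
    (f := fun θ : ℝ => h θ * g θ * Complex.exp (-(Complex.I * k * θ)))
    (fun n _ => ‖c n‖ * C)
    (fun n => Measurable.aestronglyMeasurable (by fun_prop))
    (fun n => .of_forall fun θ _ => by
      rw [norm_mul, norm_mul, hE, mul_one]
      exact mul_le_mul_of_nonneg_left (hgC θ) (norm_nonneg _))
    (.of_forall fun θ _ => hc.mul_right C)
    (by simp)
    (.of_forall fun θ _ => by
      rw [mul_assoc]
      refine ((hh θ).mul_right (g θ * Complex.exp (-(Complex.I * k * θ)))).congr_fun fun n => ?_
      have : Complex.exp (-(Complex.I * (k + σ * n : ℤ) * θ)) =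
          Complex.exp (-(Complex.I * (σ * n : ℤ) * θ)) * Complex.exp (-(Complex.I * k * θ)) := by
        rw [← Complex.exp_add]
        push_cast
        ring_nf
      rw [this]
      ring)
  have := key.mul_left ((1 / (2 * Real.pi) : ℝ) : ℂ)
  refine this.congr_fun fun n => ?_
  rw [fc, intervalIntegral.integral_const_mul]
  ring

theorem fc_one (n : ℤ) : fc (fun _ => 1) n = if n = 0 then 1 else 0 := by
  have hpi : (Real.pi : ℂ) ≠ 0 := by exact_mod_cast Real.pi_ne_zero
  split_ifs with h
  · subst h
    simp [fc]
    field_simp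
  · have hn : -(Complex.I * n) ≠ 0 := by simpa using h
    have := integral_exp_mul_complex (a := 0) (b := 2 * Real.pi) hn
    have h2 : Complex.exp (-(Complex.I * n) * ((2 * Real.pi : ℝ) : ℂ)) = 1 := by
      rw [Complex.exp_eq_one_iff]
      exact ⟨-n, by push_cast; ring⟩
    rw [h2] at this
    have h3 : ∫ θ in (0 : ℝ)..(2 * Real.pi), Complex.exp (-(Complex.I * n * θ)) = 0 := by
      simpa using this
    simp only [fc, one_mul, h3, mul_zero]

theorem fc_eq_fc_zero (f : ℝ → ℂ) (n : ℤ) :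
    fc f n = fc (fun θ => f θ * (Complex.exp (Complex.I * θ) ^ n)⁻¹) 0 := by
  simp only [fc, ← Complex.exp_int_mul, ← Complex.exp_neg]
  simp [mul_assoc, mul_left_comm]

theorem fc_poisson_mul_comp_moebius {ν : ℝ} (hν : |ν| < 1) {δ : ℝ} (hδ : δ = 1 ∨ δ = -1)
    (H : ℂ → ℂ) :
    fc (fun θ => poisson ν θ * H (δ * ((ν - Complex.exp (Complex.I * θ)) /
      (1 - ν * Complex.exp (Complex.I * θ))))) 0 = fc (fun θ => H (Complex.exp (Complex.I * θ))) 0 := by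
  simp only [fc, Int.cast_zero, mul_zero, zero_mul, neg_zero, Complex.exp_zero, mul_one]
  rw [← integral_comp_moebius hν hδ H]
  simp

/-- The function on the circle with Taylor coefficients `moebiusEntry ν · k`. -/
def moebiusFun (ν : ℝ) (k : ℕ) (t : ℂ) : ℂ :=
  (√(1 - ν ^ 2) : ℝ) * (ν - t) ^ k / (1 - ν * t) ^ (k + 1)

theorem sub_ne_zero_of_norm_eq_one {ν : ℝ} (hν : |ν| < 1) {t : ℂ} (ht : ‖t‖ = 1) :
    ν - t ≠ 0 := by
  intro h
  rw [← sub_eq_zero.1 h, Complex.norm_real, Real.norm_eq_abs] at ht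
  linarith

theorem moebiusFun_eq (ν : ℝ) (k : ℕ) (t : ℂ) :
    moebiusFun ν k t = (√(1 - ν ^ 2) : ℝ) / (1 - ν * t) * ((ν - t) / (1 - ν * t)) ^ k := by
  rw [moebiusFun, div_pow, pow_succ' (1 - ν * t), div_mul_div_comm]

theorem moebiusFun_inv {ν : ℝ} (hν : |ν| < 1) (k : ℕ) {t : ℂ} (ht : ‖t‖ = 1) :
    moebiusFun ν k t⁻¹ =
      (√(1 - ν ^ 2) : ℝ) * t / (t - ν) * (((ν - t) / (1 - ν * t)) ^ k)⁻¹ := by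
  have ht0 : t ≠ 0 := norm_ne_zero_iff.1 (by rw [ht]; norm_num)
  have h1 := one_sub_mul_ne_zero hν ht
  have h2 := sub_ne_zero_of_norm_eq_one hν ht
  have h3 : t - ν ≠ 0 := by rw [← neg_sub]; exact neg_ne_zero.2 h2
  have h4 : 1 - ν * t⁻¹ ≠ 0 := one_sub_mul_ne_zero hν (by simp [ht])
  have h5 : 1 - ν * t⁻¹ = (t - ν) / t := by field_simp
  rw [moebiusFun_eq, ← inv_pow, h5, inv_div]
  have h6 : (ν - t⁻¹) / ((t - ν) / t) = (1 - ν * t) / (ν - t) := by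
    rw [div_eq_div_iff (div_ne_zero h3 ht0) h2]
    field_simp
    ring
  rw [h6, div_div_eq_mul_div]

theorem poisson_eq {ν : ℝ} (hν : |ν| < 1) (θ : ℝ) :
    (poisson ν θ : ℂ) = (√(1 - ν ^ 2) : ℝ) ^ 2 * Complex.exp (Complex.I * θ) /
      ((Complex.exp (Complex.I * θ) - ν) * (1 - ν * Complex.exp (Complex.I * θ))) := by
  have ht := norm_exp_I_mul_ofReal θ
  rw [poisson]
  set t := Complex.exp (Complex.I * θ)
  have ht0 : t ≠ 0 := norm_ne_zero_iff.1 (by rw [ht]; norm_num)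
  have hs : ((√(1 - ν ^ 2) : ℝ) : ℂ) ^ 2 = 1 - ν ^ 2 := by
    rw [← Complex.ofReal_pow, Real.sq_sqrt (by nlinarith [sq_abs ν, abs_nonneg ν])]
    push_cast
    ring
  have h1 := one_sub_mul_ne_zero hν ht
  have h2 := sub_ne_zero_of_norm_eq_one hν ht
  have h3 : t - ν ≠ 0 := by rw [← neg_sub]; exact neg_ne_zero.2 h2
  have hc : starRingEnd ℂ (1 - ν * t) = (t - ν) / t := by
    have : starRingEnd ℂ t = t⁻¹ := (Complex.inv_eq_conj ht).symm
    simp only [map_sub, map_one, map_mul, Complex.conj_ofReal, this]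
    field_simp
  rw [Complex.ofReal_div, Complex.normSq_eq_conj_mul_self, hc, hs]
  push_cast
  field_simp

theorem hasSum_moebiusFun_inv {ν : ℝ} (hν : |ν| < 1) (k : ℕ) (θ : ℝ) :
    HasSum (fun n : ℕ => (moebiusEntry ν n k : ℂ) * Complex.exp (-(Complex.I * (1 * n : ℤ) * θ)))
      (moebiusFun ν k (Complex.exp (Complex.I * θ))⁻¹) := by
  have := hasSum_moebiusEntry_mul_pow hν k (t := (Complex.exp (Complex.I * θ))⁻¹)
    (by rw [norm_inv, norm_exp_I_mul_ofReal, inv_one])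
  refine this.congr_fun fun n => ?_
  rw [← Complex.exp_neg, ← Complex.exp_nat_mul]
  push_cast
  ring_nf

theorem hasSum_moebiusFun {ν : ℝ} (hν : |ν| < 1) (k : ℕ) (θ : ℝ) :
    HasSum (fun n : ℕ => (moebiusEntry ν n k : ℂ) * Complex.exp (-(Complex.I * (-1 * n : ℤ) * θ)))
      (moebiusFun ν k (Complex.exp (Complex.I * θ))) := by
  have := hasSum_moebiusEntry_mul_pow hν k (norm_exp_I_mul_ofReal θ)
  refine this.congr_fun fun n => ?_
  rw [← Complex.exp_nat_mul]
  push_cast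
  ring_nf

theorem summable_norm_moebiusEntry {ν : ℝ} (hν : |ν| < 1) (k : ℕ) :
    Summable fun m => ‖(moebiusEntry ν m k : ℂ)‖ := by
  simpa using summable_abs_moebiusEntry hν k

theorem measurable_moebiusFun (ν : ℝ) (k : ℕ) : Measurable (moebiusFun ν k) := by
  unfold moebiusFun
  fun_prop

theorem norm_moebiusFun_le {ν : ℝ} (hν : |ν| < 1) (k : ℕ) {t : ℂ} (ht : ‖t‖ = 1) :
    ‖moebiusFun ν k t‖ ≤ ∑' m, |moebiusEntry ν m k| := by
  rw [moebiusFun, ← (hasSum_moebiusEntry_mul_pow hν k ht).tsum_eq]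
  have h : ∀ m, ‖(moebiusEntry ν m k : ℂ) * t ^ m‖ = |moebiusEntry ν m k| := by simp [ht]
  simp only [← h]
  exact norm_tsum_le_tsum_norm (by simpa only [h] using summable_abs_moebiusEntry hν k)

theorem fc_moebiusFun {ν : ℝ} (hν : |ν| < 1) (k m : ℕ) :
    fc (fun θ => moebiusFun ν k (Complex.exp (Complex.I * θ))) m = moebiusEntry ν m k := by
  have h := hasSum_mul_fc (summable_norm_moebiusEntry hν k) (g := fun _ => 1) measurable_const
    (C := 1) (by simp) (-1) m (hasSum_moebiusFun hν k)
  simp only [mul_one] at h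
  rw [← h.tsum_eq, tsum_eq_single m]
  · rw [fc_one]; simp
  · intro n hn
    rw [fc_one, if_neg (by omega), mul_zero]

theorem hasSum_moebiusEntry_mul_moebiusEntry {ν : ℝ} (hν : |ν| < 1) (j k : ℕ) :
    HasSum (fun m => moebiusEntry ν m j * moebiusEntry ν m k) (if j = k then 1 else 0) := by
  have h := hasSum_mul_fc (summable_norm_moebiusEntry hν j)
    (g := fun θ => moebiusFun ν k (Complex.exp (Complex.I * θ)))
    ((measurable_moebiusFun ν k).comp (by fun_prop))
    (fun θ => norm_moebiusFun_le hν k (norm_exp_I_mul_ofReal θ)) 1 0 (hasSum_moebiusFun_inv hν j)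
  simp only [one_mul, zero_add, fc_moebiusFun hν] at h
  have hv : fc (fun θ => moebiusFun ν j (Complex.exp (Complex.I * θ))⁻¹ *
      moebiusFun ν k (Complex.exp (Complex.I * θ))) 0 = if j = k then 1 else 0 := by
    have h1 := fc_poisson_mul_comp_moebius hν (Or.inl rfl) fun z => z ^ k * (z ^ j)⁻¹
    have h2 := fc_eq_fc_zero (fun _ => 1) ((j : ℤ) - k)
    rw [fc_one] at h2
    have h3 : ((j : ℤ) - k = 0) ↔ j = k := by omega
    simp only [h3] at h2
    rw [h2]
    convert h1 using 2
    · funext θ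
      have ht := norm_exp_I_mul_ofReal θ
      rw [moebiusFun_inv hν j ht, moebiusFun_eq, poisson_eq hν, Complex.ofReal_one, one_mul]
      set t := Complex.exp (Complex.I * θ)
      generalize (ν - t) / (1 - ν * t) = b
      rw [← div_div]
      ring
    · funext θ
      rw [one_mul, zpow_sub₀ (Complex.exp_ne_zero _), inv_div, zpow_natCast, zpow_natCast,
        div_eq_mul_inv]
  rw [hv] at h
  rw [← Complex.hasSum_ofReal]
  convert! h using 1
  · push_cast; rfl
  · split_ifs <;> simp

theorem fc_moebiusFun_mul {ν : ℝ} (hν : |ν| < 1) {δ : ℝ} (hδ : δ = 1 ∨ δ = -1) (F : ℂ → ℂ)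
    (j k : ℕ) :
    fc (fun θ => moebiusFun ν k (Complex.exp (Complex.I * θ))⁻¹ *
      (moebiusFun ν j (Complex.exp (Complex.I * θ))⁻¹ *
        F (δ * ((ν - Complex.exp (Complex.I * θ)) / (1 - ν * Complex.exp (Complex.I * θ)))))) 1 =
      -δ ^ (j + k + 1) * fc (fun θ => F (Complex.exp (Complex.I * θ))) ((j : ℤ) + k + 1) := by
  have h1 := fc_poisson_mul_comp_moebius hν hδ fun z =>
    -δ ^ (j + k + 1) * (F z * (z ^ (j + k + 1))⁻¹)
  rw [fc_eq_fc_zero _ 1, fc_eq_fc_zero _ ((j : ℤ) + k + 1)]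
  have h2 (c : ℂ) (f : ℝ → ℂ) : c * fc f 0 = fc (fun θ => c * f θ) 0 := by
    simp only [fc, mul_assoc, intervalIntegral.integral_const_mul]
    ring
  rw [h2]
  convert h1 using 2
  · funext θ
    have hδ0 : (δ : ℂ) ^ (j + k + 1) ≠ 0 := by rcases hδ with rfl | rfl <;> simp
    have ht := norm_exp_I_mul_ofReal θ
    rw [moebiusFun_inv hν j ht, moebiusFun_inv hν k ht, poisson_eq hν, mul_pow]
    set t := Complex.exp (Complex.I * θ)
    set f := F (δ * ((ν - t) / (1 - ν * t)))
    have ht0 : t ≠ 0 := norm_ne_zero_iff.1 (by rw [ht]; norm_num)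
    have h1 := one_sub_mul_ne_zero hν ht
    have h2 := sub_ne_zero_of_norm_eq_one hν ht
    have h3 : t - ν ≠ 0 := by rw [← neg_sub]; exact neg_ne_zero.2 h2
    rw [zpow_one, pow_succ ((ν - t) / (1 - ν * t)), pow_add ((ν - t) / (1 - ν * t)),
      mul_inv, mul_inv, mul_inv, inv_div (ν - t)]
    have h5 : 1 - t * ν ≠ 0 := by rwa [mul_comm]
    generalize (((ν - t) / (1 - ν * t)) ^ j)⁻¹ = x
    generalize (((ν - t) / (1 - ν * t)) ^ k)⁻¹ = y
    generalize (δ : ℂ) ^ (j + k + 1) = d at *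
    have h4 : (1 - ν * t) / (ν - t) = -((1 - ν * t) / (t - ν)) := by
      rw [← neg_sub t, div_neg]
    rw [h4]
    field_simp
  · norm_cast

/-- The square-summable sequence of Taylor coefficients of `δ ^ k` times `moebiusFun ν k`. -/
def moebiusVec {ν : ℝ} (hν : |ν| < 1) (δ : ℝ) (k : ℕ) : l2 :=
  ⟨fun m => (δ : ℂ) ^ k * moebiusEntry ν m k, by
    refine Memℓp.of_exponent_ge (q := 1) (memℓp_gen ?_) (by norm_num)
    simpa using (summable_abs_moebiusEntry hν k).mul_left (|δ| ^ k)⟩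

theorem moebiusVec_apply {ν : ℝ} (hν : |ν| < 1) (δ : ℝ) (k m : ℕ) :
    moebiusVec hν δ k m = (δ : ℂ) ^ k * moebiusEntry ν m k := rfl

theorem hasSum_smul_ee (x : l2) : HasSum (fun n => x n • ee n) x := by
  refine (lp.hasSum_single (by norm_num) x).congr_fun fun n => ?_
  rw [ee, ← lp.single_smul, smul_eq_mul, mul_one]

theorem inner_ee_left (j : ℕ) (x : l2) : ⟪ee j, x⟫_ℂ = x j := by
  rw [ee, lp.inner_single_left]
  simp

theorem orthonormal_moebiusVec {ν : ℝ} (hν : |ν| < 1) {δ : ℝ} (hδ : δ = 1 ∨ δ = -1) :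
    Orthonormal ℂ (moebiusVec hν δ) := by
  rw [orthonormal_iff_ite]
  intro j k
  refine (lp.hasSum_inner (moebiusVec hν δ j) (moebiusVec hν δ k)).unique ?_
  have h := ((Complex.hasSum_ofReal.2 (hasSum_moebiusEntry_mul_moebiusEntry hν j k)).mul_left
    ((δ : ℂ) ^ j * (δ : ℂ) ^ k))
  have hv : (δ : ℂ) ^ j * (δ : ℂ) ^ k * ((if j = k then 1 else 0 : ℝ) : ℂ) =
      if j = k then 1 else 0 := by
    split_ifs with hjk
    · subst hjk
      rw [← mul_pow]
      rcases hδ with rfl | rfl <;> simp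
    · simp
  rw [hv] at h
  refine h.congr_fun fun m => ?_
  simp only [moebiusVec_apply, RCLike.inner_apply, map_mul, map_pow, Complex.conj_ofReal]
  push_cast
  ring

theorem hasSum_smul_moebiusVec {ν : ℝ} (hν : |ν| < 1) {δ : ℝ} (hδ : δ = 1 ∨ δ = -1) (n : ℕ) :
    HasSum (fun k => ((δ : ℂ) ^ k * moebiusEntry ν n k) • moebiusVec hν δ k) (ee n) := by
  have hδ1 : |δ| = 1 := by rcases hδ with rfl | rfl <;> simp
  have hs : Summable fun k => ((δ : ℂ) ^ k * moebiusEntry ν n k) • moebiusVec hν δ k := by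
    refine Summable.of_norm ?_
    simp only [norm_smul, (orthonormal_moebiusVec hν hδ).1, norm_mul, norm_pow, Complex.norm_real,
      Real.norm_eq_abs, hδ1, one_pow, one_mul, mul_one, moebiusEntry_symm ν n]
    exact summable_abs_moebiusEntry hν n
  convert! hs.hasSum using 1
  ext m
  have h1 := hs.hasSum.mapL (innerSL ℂ (ee m))
  simp only [innerSL_apply_apply, inner_smul_right, inner_ee_left] at h1
  have h2 := Complex.hasSum_ofReal.2 (hasSum_moebiusEntry_mul_moebiusEntry hν n m)
  have h3 := h2.unique (h1.congr_fun fun k => ?_)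
  · rw [← h3, ee, lp.single_apply]
    rcases eq_or_ne n m with rfl | h
    · simp
    · simp [h, h.symm]
  · have hδ2 : (δ : ℂ) ^ k * (δ : ℂ) ^ k = 1 := by
      rw [← mul_pow]; rcases hδ with rfl | rfl <;> simp
    rw [moebiusVec_apply, moebiusEntry_symm ν k, moebiusEntry_symm ν k]
    push_cast
    linear_combination (-(moebiusEntry ν n k : ℂ) * moebiusEntry ν m k) * hδ2

theorem orthogonal_span_moebiusVec {ν : ℝ} (hν : |ν| < 1) {δ : ℝ} (hδ : δ = 1 ∨ δ = -1) :
    (Submodule.span ℂ (Set.range (moebiusVec hν δ)))ᗮ = ⊥ := by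
  rw [Submodule.eq_bot_iff]
  intro x hx
  ext n
  have h0 (k : ℕ) : ⟪x, moebiusVec hν δ k⟫_ℂ = 0 :=
    (Submodule.mem_orthogonal' _ x).1 hx _ (Submodule.subset_span ⟨k, rfl⟩)
  have h := (hasSum_smul_moebiusVec hν hδ n).mapL (innerSL ℂ x)
  simp only [innerSL_apply_apply, inner_smul_right, h0, mul_zero] at h
  rw [← inner_ee_left, ← inner_conj_symm, h.unique hasSum_zero]
  simp

theorem hasSum_inner_moebiusVec {ν : ℝ} (hν : |ν| < 1) (δ : ℝ) (j : ℕ) (x : l2) :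
    HasSum (fun m => (δ : ℂ) ^ j * moebiusEntry ν m j * x m) ⟪moebiusVec hν δ j, x⟫_ℂ := by
  refine (lp.hasSum_inner (moebiusVec hν δ j) x).congr_fun fun m => ?_
  simp only [moebiusVec_apply, RCLike.inner_apply, map_mul, map_pow, Complex.conj_ofReal]
  ring

theorem inner_moebiusVec_hankel {ν : ℝ} (hν : |ν| < 1) (δ : ℝ) {ψ : ℝ → ℂ} (hψ : Measurable ψ)
    {C : ℝ} (hC : ∀ θ, ‖ψ θ‖ ≤ C) (A : l2 →L[ℂ] l2)
    (hA : ∀ j k : ℕ, ent A j k = fc ψ ((j : ℤ) + k + 1)) (j k : ℕ) :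
    ⟪moebiusVec hν δ j, A (moebiusVec hν δ k)⟫_ℂ = (δ : ℂ) ^ j * (δ : ℂ) ^ k *
      fc (fun θ => moebiusFun ν k (Complex.exp (Complex.I * θ))⁻¹ *
        (moebiusFun ν j (Complex.exp (Complex.I * θ))⁻¹ * ψ θ)) 1 := by
  have hinv (θ : ℝ) : ‖(Complex.exp (Complex.I * θ))⁻¹‖ = 1 := by
    rw [norm_inv, norm_exp_I_mul_ofReal, inv_one]
  have h1 (n : ℕ) : ⟪moebiusVec hν δ j, A (ee n)⟫_ℂ = (δ : ℂ) ^ j *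
      fc (fun θ => moebiusFun ν j (Complex.exp (Complex.I * θ))⁻¹ * ψ θ) (1 + 1 * n) := by
    refine (hasSum_inner_moebiusVec hν δ j (A (ee n))).unique ?_
    refine ((hasSum_mul_fc (summable_norm_moebiusEntry hν j) hψ hC 1 (1 + 1 * n)
      (hasSum_moebiusFun_inv hν j)).mul_left ((δ : ℂ) ^ j)).congr_fun fun m => ?_
    rw [← inner_ee_left m, show ⟪ee m, A (ee n)⟫_ℂ = _ from hA m n, mul_assoc]
    congr 3
    ring
  have h2 := ((hasSum_smul_ee (moebiusVec hν δ k)).mapL A).mapL (innerSL ℂ (moebiusVec hν δ j))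
  simp only [innerSL_apply_apply, map_smul, h1] at h2
  refine h2.unique ?_
  refine ((hasSum_mul_fc (summable_norm_moebiusEntry hν k)
    (g := fun θ => moebiusFun ν j (Complex.exp (Complex.I * θ))⁻¹ * ψ θ)
    (C := (∑' m, |moebiusEntry ν m j|) * C)
    (((measurable_moebiusFun ν j).comp (by fun_prop)).mul hψ) (fun θ => ?_) 1 1
    (hasSum_moebiusFun_inv hν k)).mul_left ((δ : ℂ) ^ j * (δ : ℂ) ^ k)).congr_fun fun n => ?_
  · rw [norm_mul]
    exact mul_le_mul (norm_moebiusFun_le hν j (hinv θ)) (hC θ) (norm_nonneg _)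
      (tsum_nonneg fun _ => abs_nonneg _)
  · rw [moebiusVec_apply]
    ring

theorem exists_unitary_conj_hankel {ν : ℝ} (hν : |ν| < 1) {δ : ℝ} (hδ : δ = 1 ∨ δ = -1)
    {F : ℂ → ℂ} (hF : Measurable F) {C : ℝ} (hC : ∀ z, ‖z‖ = 1 → ‖F z‖ ≤ C) (A B : l2 →L[ℂ] l2)
    (hA : ∀ j k : ℕ, ent A j k = fc (fun θ => F (δ * ((ν - Complex.exp (Complex.I * θ)) /
      (1 - ν * Complex.exp (Complex.I * θ))))) ((j : ℤ) + k + 1))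
    (hB : ∀ j k : ℕ, ent B j k = fc (fun θ => F (Complex.exp (Complex.I * θ))) ((j : ℤ) + k + 1)) :
    ∃ U : l2 ≃ₗᵢ[ℂ] l2, ∀ x : l2, U (A (U.symm x)) = (-δ : ℂ) • B x := by
  let b := HilbertBasis.mkOfOrthogonalEqBot (orthonormal_moebiusVec hν hδ)
    (orthogonal_span_moebiusVec hν hδ)
  have hb (k : ℕ) : b k = moebiusVec hν δ k := by
    rw [HilbertBasis.coe_mkOfOrthogonalEqBot]
  refine ⟨b.repr, fun x => ?_⟩
  have hbasis (k : ℕ) : b.repr (A (b.repr.symm (ee k))) = (-δ : ℂ) • B (ee k) := by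
    ext j
    rw [b.repr_apply_apply, ee, b.repr_symm_single, hb, hb,
      inner_moebiusVec_hankel hν δ ?_ (C := C) ?_ A hA j k, fc_moebiusFun_mul hν hδ]
    · rw [lp.coeFn_smul, Pi.smul_apply, ← inner_ee_left j, ← hB]
      have hδ2 : (δ : ℂ) ^ j * (δ : ℂ) ^ k * δ ^ (j + k + 1) = δ := by
        rw [← pow_add, pow_succ, ← mul_assoc, ← mul_pow]
        rcases hδ with rfl | rfl <;> simp
      rw [smul_eq_mul, ← mul_assoc, mul_neg, hδ2]
      rfl
    · fun_prop
    · intro θ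
      refine hC _ ?_
      have h := congrArg norm (exp_moebiusAngle hν θ)
      rw [norm_exp_I_mul_ofReal, norm_div, norm_sub_rev] at h
      rw [norm_mul, norm_div, ← h]
      rcases hδ with rfl | rfl <;> simp
  have h1 := (hasSum_smul_ee x).mapL
    ((b.repr : l2 →L[ℂ] l2).comp (A.comp (b.repr.symm : l2 →L[ℂ] l2)))
  have h2 := (hasSum_smul_ee x).mapL ((-δ : ℂ) • B)
  refine h1.unique (h2.congr_fun fun n => ?_)
  rw [map_smul, map_smul, smul_apply, ← hbasis]
  rfl

theorem measurable_uc (β : ℂ) : Measurable (uc β) := by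
  unfold uc
  fun_prop

theorem norm_uc_ofReal (β : ℝ) {z : ℂ} (hz : ‖z‖ = 1) : ‖uc β z‖ = 1 := by
  rw [uc, Complex.norm_exp, Complex.re_ofReal_mul, Complex.log_re, norm_neg, hz]
  simp

theorem fc_sub_one {f : ℝ → ℂ} (hf : Measurable f) {C : ℝ} (hC : ∀ θ, ‖f θ‖ ≤ C) {n : ℤ}
    (hn : n ≠ 0) : fc (fun θ => f θ - 1) n = fc f n := by
  have h1 := fc_one n
  rw [if_neg hn] at h1
  have hE (θ : ℝ) : ‖Complex.exp (-(Complex.I * n * θ))‖ = 1 := by simp [Complex.norm_exp]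
  have hi (g : ℝ → ℂ) (hg : Measurable g) (D : ℝ) (hD : ∀ θ, ‖g θ‖ ≤ D) :
      IntervalIntegrable (fun θ : ℝ => g θ * Complex.exp (-(Complex.I * n * θ))) volume
        0 (2 * Real.pi) := by
    refine (intervalIntegrable_const (c := D)).mono_fun
      (Measurable.aestronglyMeasurable (by fun_prop)) (.of_forall fun θ => ?_)
    simp only [norm_mul, hE, mul_one]
    exact (hD θ).trans (le_abs_self D)
  rw [← sub_zero (fc f n), ← h1]
  simp only [fc, sub_mul]
  rw [intervalIntegral.integral_sub (hi f hf C hC) (hi (fun _ => 1) measurable_const 1 (by simp)),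
    mul_sub]

/-- For `μ ∈ [0,1)`, with `ψ_μ^{(1)}(t) = u_{−1/2,1}((t−μ)/(1−μt)) − 1` and
`ψ_μ^{(−1)}(t) = u_{1/2,1}((−t−μ)/(1+μt)) − 1`, the Hankel operator `H(ψ_μ^{(1)})` is
unitarily equivalent to `H(u_{−1/2,1})`, and `H(ψ_μ^{(−1)})` is unitarily equivalent to
`−H(u_{1/2,1})`. -/
theorem stmt14 (μ : ℝ) (hμ0 : 0 ≤ μ) (hμ1 : μ < 1)
    (ψ1 ψm : ℝ → ℂ)
    (hψ1 : ∀ θ : ℝ, ψ1 θ =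
      uc (-(1/2)) ((Complex.exp (Complex.I * θ) - μ) /
        (1 - μ * Complex.exp (Complex.I * θ))) - 1)
    (hψm : ∀ θ : ℝ, ψm θ =
      uc (1/2) ((-Complex.exp (Complex.I * θ) - μ) /
        (1 + μ * Complex.exp (Complex.I * θ))) - 1)
    (Hψ1 Hψm Hu1 Hu2 : l2 →L[ℂ] l2)
    (hHψ1 : ∀ j k : ℕ, ent Hψ1 j k = fc ψ1 ((j : ℤ) + k + 1))
    (hHψm : ∀ j k : ℕ, ent Hψm j k = fc ψm ((j : ℤ) + k + 1))
    (hHu1 : ∀ j k : ℕ, ent Hu1 j k =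
      fc (fun θ => uc (-(1/2)) (Complex.exp (Complex.I * θ))) ((j : ℤ) + k + 1))
    (hHu2 : ∀ j k : ℕ, ent Hu2 j k =
      fc (fun θ => uc (1/2) (Complex.exp (Complex.I * θ))) ((j : ℤ) + k + 1)) :
    (∃ U : l2 ≃ₗᵢ[ℂ] l2, ∀ x : l2, U (Hψ1 (U.symm x)) = Hu1 x) ∧
    (∃ U : l2 ≃ₗᵢ[ℂ] l2, ∀ x : l2, U (Hψm (U.symm x)) = -(Hu2 x)) := by
  have hν : |μ| < 1 := by rwa [abs_of_nonneg hμ0]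
  have hν' : |-μ| < 1 := by rwa [abs_neg]
  have hbound (β : ℝ) (z : ℂ) (hz : ‖z‖ = 1) : ‖uc β z - 1‖ ≤ 2 := by
    refine (norm_sub_le _ _).trans ?_
    rw [norm_uc_ofReal β hz]
    norm_num
  have hsub (β : ℝ) (j k : ℕ) :
      fc (fun θ => uc β (Complex.exp (Complex.I * θ))) ((j : ℤ) + k + 1) =
        fc (fun θ => uc β (Complex.exp (Complex.I * θ)) - 1) ((j : ℤ) + k + 1) :=
    (fc_sub_one ((measurable_uc β).comp (by fun_prop))
      (fun θ => (norm_uc_ofReal β (norm_exp_I_mul_ofReal θ)).le) (by omega)).symm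
  have e1 : (-(1 / 2) : ℂ) = ((-(1 / 2) : ℝ) : ℂ) := by push_cast; rfl
  have e2 : (1 / 2 : ℂ) = ((1 / 2 : ℝ) : ℂ) := by push_cast; rfl
  constructor
  · obtain ⟨U, hU⟩ := exists_unitary_conj_hankel hν (Or.inr rfl)
      ((measurable_uc (-(1 / 2) : ℝ)).sub_const 1) (hbound _) Hψ1 Hu1
      (fun j k => by
        rw [hHψ1, funext hψ1, e1]
        congr! 4 with θ
        push_cast
        ring)
      (fun j k => by rw [hHu1, e1, hsub])
    exact ⟨U, fun x => by rw [hU]; simp⟩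
  · obtain ⟨U, hU⟩ := exists_unitary_conj_hankel hν' (Or.inl rfl)
      ((measurable_uc (1 / 2 : ℝ)).sub_const 1) (hbound _) Hψm Hu2
      (fun j k => by
        rw [hHψm, funext hψm, e2]
        congr! 4 with θ
        push_cast
        ring)
      (fun j k => by rw [hHu2, e2, hsub])
    exact ⟨U, fun x => by rw [hU]; simp⟩

end
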